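/- Let V={1,…,n} be the vertex set of a finite connected undirected graph Γ=(V,E), let x,y∈V, and let M∈ℝ^{V×V} be a real symmetric matrix with M_ij=0 whenever i≠j and (i∼j)∉E. Then det M_{y^c x^c} = (−1)^{x+y} Σ_{T∈𝒯_xy} [Π_{j∈R(T)∖{x}} (Σ_{i∈V} M_ij)] Π_{(i∼j)∈F(T)} (−M_ij), where M_{y^c x^c} is the minor of M obtained by deleting column x and row y. -/

import Mathlib

/-!
Let `w(a, j)` be the weight of an arrow from `j ∈ V` to `a ∈ V ∪ {ρ}`: it is `-M a j` for `a ∈ V`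
and the column sum `∑ i, M i j` for `a = ρ`. With `e_ρ = 0`, row `c` of the symmetric matrix `M`
is `∑ a, w(a, c) (e_c - e_a)` (`row_eq_sum`). Up to the sign `(-1)^(x+y)`, the minor is the
determinant of `M` with row `x` replaced by `e_y`. Multilinearity expands it as a sum over maps
`f : V → V ∪ {ρ}` with `f x = ρ`, of `∏_{c ≠ x} w(f c, c)` times the corresponding cofactor of the
matrix with rows `e_c - e_{f c}` (`det_updateRow_eq_sum`).

The determinant of the latter matrix is `1` if `f` is a parent map (iterating `f` always leads to
`ρ`), because then it is `1 - P` with `P` nilpotent (`det_incMat`), and `0` otherwise, because then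
the indicator of the vertices not leading to `ρ` is in its kernel (`det_incMat_of_not`). Writing
`e_y = (e_x - e_ρ) - (e_x - e_y)`, the cofactor is the difference of two such determinants, for `f`
and for `f` redirected at `x` to `y`. The redirected map is a parent map iff `f` is one and `y` does
not lead to `x` (`isParentMap_update_iff`). Hence the cofactor is the indicator that `f` is a parent
map under which `y` leads to `x` (`det_updateRow_incMat`).

Finally, parent maps correspond bijectively to spanning trees on `V ∪ {ρ}` through the edge set
`{j, f j}` (`treeOf_injOn`, `treeOf_isTree`, `exists_parentMap`). The roots of the tree are the `j`
with `f j = ρ`, and `x ↔_T y` for a root `x` means that `y` leads to `x` (`connIn_treeOf`). Parent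
maps using a non-edge of the graph have weight zero (`sum_parentMaps_eq`).
-/


open MeasureTheory Real Filter
open scoped BigOperators

attribute [local instance] Classical.propDecidable

namespace H22

variable {V : Type*} [Fintype V] [DecidableEq V]

/-- The augmented graph `Γ_ρ`: add an extra vertex `ρ` (encoded by `none`)
joined to every vertex of the original graph. -/
def aug (G : SimpleGraph V) : SimpleGraph (Option V) :=
  SimpleGraph.fromRel (fun a b =>
    match a, b with
    | some i, some j => G.Adj i j
    | _, _ => True)

/-- `T` is (the edge set of) a spanning tree of `G`. -/
def IsSpanningTree {α : Type*} (G : SimpleGraph α) (T : Finset (Sym2 α)) : Prop :=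
  ↑T ⊆ G.edgeSet ∧ (SimpleGraph.fromEdgeSet (↑T : Set (Sym2 α))).IsTree

/-- The finset of all spanning trees of `G`. -/
noncomputable def STrees {α : Type*} [Fintype α] [DecidableEq α] (G : SimpleGraph α) :
    Finset (Finset (Sym2 α)) :=
  Finset.univ.filter (fun T => IsSpanningTree G T)

/-- Extension of a vector `t : V → ℝ` to `Option V` by `t_ρ := 0`. -/
def extV (t : V → ℝ) : Option V → ℝ := fun a => Option.elim a 0 t

/-- Lift of a (symmetrized) function of two vertices to unordered pairs. -/
noncomputable def esym {α : Type*} (f : α → α → ℝ) : Sym2 α → ℝ :=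
  Sym2.lift ⟨fun a b => (f a b + f b a) / 2, fun a b => by ring⟩

/-- Combined edge weights on the augmented graph: `β` on edges of `Γ`,
`ε_i` on the edge `i ∼ ρ`. -/
def bres (β : V → V → ℝ) (ε : V → ℝ) : Option V → Option V → ℝ := fun a b =>
  match a, b with
  | some i, some j => β i j
  | some i, none => ε i
  | none, some j => ε j
  | none, none => 0

/-- `B_{ij}(t,s) = cosh(t_i - t_j) + ½ (s_i - s_j)² e^{t_i+t_j}` on the augmented graph. -/
noncomputable def Bfun (t s : V → ℝ) (a b : Option V) : ℝ :=
  Real.cosh (extV t a - extV t b) +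
    (1 / 2) * (extV s a - extV s b) ^ 2 * Real.exp (extV t a + extV t b)

/-- Weight `β_{ij} e^{t_i+t_j}` of an edge of the augmented graph. -/
noncomputable def treeW (β : V → V → ℝ) (ε : V → ℝ) (t : V → ℝ) : Sym2 (Option V) → ℝ :=
  esym (fun a b => bres β ε a b * Real.exp (extV t a + extV t b))

/-- Gibbs factor `e^{-β_{ij}(B_{ij}(t,s)-1)}` of an edge of the augmented graph. -/
noncomputable def gibbs (β : V → V → ℝ) (ε : V → ℝ) (t s : V → ℝ) : Sym2 (Option V) → ℝ :=
  esym (fun a b => Real.exp (-(bres β ε a b * (Bfun t s a b - 1))))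

/-- The density of the measure `μ^ε` with respect to
(Lebesgue on `ℝ^V × ℝ^V`) × (counting measure on spanning trees). -/
noncomputable def dens (G : SimpleGraph V) (β : V → V → ℝ) (ε : V → ℝ)
    (t s : V → ℝ) (T : Finset (Sym2 (Option V))) : ℝ :=
  (∏ j, Real.exp (-t j) / (2 * Real.pi)) *
  (∏ e ∈ Finset.univ.filter (fun e : Sym2 (Option V) => e ∈ (aug G).edgeSet),
      gibbs β ε t s e) *
  (∏ e ∈ T, treeW β ε t e)

/-- Expectation of an observable `f(t,s,T)` under the measure `μ^ε`. -/
noncomputable def expect (G : SimpleGraph V) (β : V → V → ℝ) (ε : V → ℝ)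
    (f : (V → ℝ) → (V → ℝ) → Finset (Sym2 (Option V)) → ℝ) : ℝ :=
  ∑ T ∈ STrees (aug G), ∫ p : (V → ℝ) × (V → ℝ), dens G β ε p.1 p.2 T * f p.1 p.2 T

/-- The weighted graph Laplacian `A(t)` of `Γ`. -/
noncomputable def Amat (G : SimpleGraph V) (β : V → V → ℝ) (t : V → ℝ) : Matrix V V ℝ :=
  Matrix.of fun i j =>
    if i = j then ∑ k ∈ Finset.univ.filter (fun k => G.Adj k j), β k j * Real.exp (t k + t j)
    else if G.Adj i j then -(β i j * Real.exp (t i + t j)) else 0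

/-- The pinning diagonal matrix `ε̂(t) = diag(ε_i e^{t_i})`. -/
noncomputable def epsHat (ε : V → ℝ) (t : V → ℝ) : Matrix V V ℝ :=
  Matrix.diagonal fun i => ε i * Real.exp (t i)

/-- The Green's function `G^ε_{xy} = e^{t_x+t_y} (A(t)+ε̂(t))⁻¹_{xy}`. -/
noncomputable def Gfun (G : SimpleGraph V) (β : V → V → ℝ) (ε : V → ℝ)
    (t : V → ℝ) (x y : V) : ℝ :=
  Real.exp (t x + t y) * (Amat G β t + epsHat ε t)⁻¹ x y

/-- The edge `i ∼ ρ` of the augmented graph. -/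
def rootEdge (i : V) : Sym2 (Option V) := s(some i, none)

/-- The set of roots `R(T) = {i ∈ V : (i ∼ ρ) ∈ T}`. -/
noncomputable def roots (T : Finset (Sym2 (Option V))) : Finset V :=
  Finset.univ.filter fun i => rootEdge i ∈ T

/-- The forest `F(T) = T ∩ E`: edges of `T` not incident to `ρ`. -/
noncomputable def forestOf (T : Finset (Sym2 (Option V))) : Finset (Sym2 (Option V)) :=
  T.filter fun e => ¬ ((none : Option V) ∈ e)

/-- `x ↔_T y`: `x` and `y` are connected in `T` through a path not using `ρ`. -/
def connIn (T : Finset (Sym2 (Option V))) (x y : V) : Prop :=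
  (SimpleGraph.fromEdgeSet (↑(forestOf T) : Set (Sym2 (Option V)))).Reachable (some x) (some y)

/-- The observable `O^π_{xy}`. -/
noncomputable def obs (pv : V → ℝ) (x y : V) (t : V → ℝ)
    (T : Finset (Sym2 (Option V))) : ℝ :=
  Real.exp (t x + t y) / (pv x * Real.exp (t x) + pv y * Real.exp (t y)) *
    (if rootEdge x ∈ T ∧ connIn T x y then 1 else 0)

/-- The pinning `ε = (π_i ε)_{i ∈ V}`. -/
def pinOf (pv : V → ℝ) (ε : ℝ) : V → ℝ := fun i => pv i * ε

/-- The pinning `c δ_x` concentrated at the single vertex `x`. -/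
def singlePin (x : V) (c : ℝ) : V → ℝ := fun i => if i = x then c else 0

end H22

namespace H22

/-- Lift a matrix indexed by `V` to `Option V`, with zero entries whenever `ρ` is involved. -/
def Mop {V : Type*} (M : Matrix V V ℝ) : Option V → Option V → ℝ := fun a b =>
  match a, b with
  | some i, some j => M i j
  | _, _ => 0

/-! ### Parent maps -/

/-- `Leads f t a`: following the partial map `f : V → V ∪ {ρ}` (with `ρ` encoded by `none`)
from `a`, one arrives at `t`. -/
inductive Leads {V : Type*} (f : V → Option V) (t : Option V) : Option V → Prop
  | refl : Leads f t t
  | step {j : V} : Leads f t (f j) → Leads f t (some j)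

/-- `f` is a parent map: following `f` from any vertex, one arrives at the root `ρ`. -/
def IsParentMap {V : Type*} (f : V → Option V) : Prop := ∀ j, Leads f none (some j)

section ParentMaps

variable {V : Type*} {f g : V → Option V}

lemma IsParentMap.leads (hf : IsParentMap f) : ∀ a, Leads f none a
  | none => .refl
  | some j => hf j

lemma Leads.of_some_none {j : V} (h : Leads f none (some j)) : Leads f none (f j) := by
  cases h; assumption

lemma leads_none_iff {a : Option V} : Leads f a none ↔ a = none := by
  constructor
  · intro h; cases h; rfl
  · rintro rfl; exact .refl

lemma leads_some_iff {t : Option V} {j : V} :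
    Leads f t (some j) ↔ t = some j ∨ Leads f t (f j) := by
  constructor
  · intro h
    cases h with
    | refl => exact .inl rfl
    | step h => exact .inr h
  · rintro (rfl | h)
    · exact .refl
    · exact .step h

/-- A parent map has no 2-cycle. -/
lemma IsParentMap.no_two_cycle (hf : IsParentMap f) {i j : V} (hj : f j = some i)
    (hi : f i = some j) : False := by
  have key : ∀ a, Leads f none a → a ≠ some i ∧ a ≠ some j := by
    intro a h
    induction h with
    | refl => simp
    | @step k _ ih => grind
  exact (key _ (hf i)).1 rfl

/-- A parent map has no fixed point. -/
lemma IsParentMap.ne_self (hf : IsParentMap f) (j : V) : f j ≠ some j :=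
  fun h => hf.no_two_cycle h h

/-- Redirecting a root `x` of a parent map to the vertex `y` keeps it a parent map exactly when
`y` is not below `x`. -/
lemma isParentMap_update_iff {x y : V} (hx : f x = none) :
    IsParentMap (Function.update f x (some y)) ↔
      IsParentMap f ∧ ¬ Leads f (some x) (some y) := by
  set f' := Function.update f x (some y) with hf'
  have hfx : f' x = some y := by simp [hf']
  have hne : ∀ j, j ≠ x → f' j = f j := fun j hj => by simp [hf', hj]
  constructor
  · intro h
    refine ⟨fun j => ?_, fun hl => ?_⟩
    · have key : ∀ a, Leads f' none a → Leads f none a := by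
        intro a ha
        induction ha with
        | refl => exact .refl
        | @step k _ ih =>
          by_cases hk : k = x
          · subst hk; exact .step (hx ▸ .refl)
          · exact .step (hne k hk ▸ ih)
      exact key _ (h j)
    · -- the vertices below `x` form a set closed under `f'`
      have key : ∀ a, Leads f' none a → ¬ Leads f (some x) a := by
        intro a ha
        induction ha with
        | refl => simp [leads_none_iff]
        | @step k _ ih =>
          intro hk
          apply ih
          by_cases hkx : k = x
          · subst hkx; rwa [hfx]
          · rw [hne k hkx]
            rcases leads_some_iff.1 hk with h1 | h1
            · exact absurd (Option.some.inj h1).symm hkx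
            · exact h1
      exact key _ (h y) hl
  · rintro ⟨h, hl⟩
    have hy : ∀ a, Leads f none a → ¬ Leads f (some x) a → Leads f' none a := by
      intro a ha
      induction ha with
      | refl => exact fun _ => .refl
      | @step k _ ih =>
        intro hk
        rw [leads_some_iff, not_or] at hk
        refine .step ?_
        rw [hne k (fun e => hk.1 (by rw [e]))]
        exact ih hk.2
    have all : ∀ a, Leads f none a → Leads f' none a := by
      intro a ha
      induction ha with
      | refl => exact .refl
      | @step k _ ih =>
        by_cases hk : k = x
        · subst hk
          exact .step (hfx ▸ hy _ (h y) hl)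
        · exact .step (hne k hk ▸ ih)
    exact fun j => all _ (h j)

end ParentMaps

/-! ### Multilinear expansion of the minor -/

section Determinants

variable {V : Type*}

/-- The oriented incidence matrix of `f`: row `c` is `e_c - e_{f c}`, where `e_ρ = 0`. -/
noncomputable def incMat (f : V → Option V) : Matrix V V ℝ :=
  Matrix.of fun c i => (if c = i then 1 else 0) - (if f c = some i then 1 else 0)

lemma det_incMat_of_not [Fintype V] {f : V → Option V} (hf : ¬ IsParentMap f) :
    (incMat f).det = 0 := by
  -- the indicator of the vertices never reaching `ρ` lies in the kernel
  rw [← Matrix.exists_mulVec_eq_zero_iff]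
  refine ⟨fun j => if Leads f none (some j) then 0 else 1, ?_, ?_⟩
  · intro h
    apply hf
    intro j
    by_contra hj
    have := congrFun h j
    simp [hj] at this
  · ext c
    simp only [incMat, Matrix.mulVec, dotProduct, Matrix.of_apply, sub_mul, ite_mul, one_mul,
      zero_mul, Finset.sum_sub_distrib, Finset.sum_ite_eq, Finset.mem_univ, if_true,
      Pi.zero_apply]
    rcases hc : f c with _ | d
    · have : Leads f none (some c) := .step (hc ▸ .refl)
      simp [this]
    · have : Leads f none (some c) ↔ Leads f none (some d) := by
        rw [leads_some_iff, hc]; simp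
      simp [this]

lemma det_incMat [Fintype V] {f : V → Option V} (hf : IsParentMap f) :
    (incMat f).det = 1 := by
  set P : Matrix V V ℝ := Matrix.of fun c i => if f c = some i then 1 else 0 with hP
  -- every row of a high power of `P` vanishes, so `incMat f = 1 - P` with `P` nilpotent
  have hrow : ∀ a, Leads f none a → ∃ k, ∀ j, a = some j → ∀ m, k ≤ m → ∀ i, (P ^ m) j i = 0 := by
    intro a ha
    induction ha with
    | refl => exact ⟨0, by simp⟩
    | @step l _ ih =>
      obtain ⟨k, hk⟩ := ih
      refine ⟨k + 1, ?_⟩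
      rintro j hj m hm i
      obtain rfl := Option.some.inj hj
      obtain ⟨m, rfl⟩ : ∃ m', m = m' + 1 := ⟨m - 1, by omega⟩
      rw [pow_succ', Matrix.mul_apply]
      refine Finset.sum_eq_zero fun d _ => ?_
      by_cases hd : f l = some d
      · rw [hk d hd m (by omega) i, mul_zero]
      · simp [hP, hd]
  choose k hk using fun j => hrow _ (hf j)
  have hnil : IsNilpotent P := by
    refine ⟨Finset.univ.sup k, ?_⟩
    ext j i
    exact hk j j rfl _ (Finset.le_sup (Finset.mem_univ j)) i
  have h1 : P.charpoly = Polynomial.X ^ Fintype.card V := by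
    have := (Matrix.isNilpotent_charpoly_sub_pow_of_isNilpotent hnil).eq_zero
    exact sub_eq_zero.1 this
  have h2 := Matrix.eval_charpoly P 1
  rw [h1] at h2
  have h3 : incMat f = Matrix.scalar V (1 : ℝ) - P := by
    ext c i
    simp [incMat, hP, Matrix.one_apply]
  rw [h3, ← h2]
  simp

/-- The `(x, y)` cofactor is written as the determinant with row `x` replaced by
`e_y`. The cofactor at `(x, y)` of the oriented incidence matrix of a map with root `x` is `1` if
that map is a parent map with `y` below `x`, and `0` otherwise. -/
lemma det_updateRow_incMat [Fintype V] {f : V → Option V} {x : V} (y : V)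
    (hx : f x = none) :
    ((incMat f).updateRow x (Pi.single y 1)).det =
      if IsParentMap f ∧ Leads f (some x) (some y) then 1 else 0 := by
  -- `e_y = (e_x - 0) - (e_x - e_y)`
  have h1 : (incMat f).updateRow x (Pi.single x 1) = incMat f := by
    ext c i
    by_cases hc : c = x
    · subst hc
      simp [incMat, hx, Pi.single_apply, eq_comm]
    · simp [Matrix.updateRow_ne hc]
  have h2 : (incMat f).updateRow x (Pi.single x 1 - Pi.single y 1) =
      incMat (Function.update f x (some y)) := by
    ext c i
    by_cases hc : c = x
    · subst hc
      simp [incMat, Pi.single_apply, eq_comm]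
    · simp [incMat, hc]
  have h3 : ((incMat f).updateRow x (Pi.single y 1)).det =
      (incMat f).det - (incMat (Function.update f x (some y))).det := by
    have := Matrix.det_updateRow_add (incMat f) x (Pi.single y 1) (Pi.single x 1 - Pi.single y 1)
    rw [add_sub_cancel, h1, h2] at this
    linarith
  rw [h3]
  have h4 := isParentMap_update_iff (y := y) hx
  by_cases ha : IsParentMap f <;> by_cases hb : Leads f (some x) (some y)
  · rw [det_incMat ha, det_incMat_of_not (by tauto)]; simp [ha, hb]
  · rw [det_incMat ha, det_incMat (by tauto)]; simp [hb]
  · rw [det_incMat_of_not ha, det_incMat_of_not (by tauto)]; simp [ha]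
  · rw [det_incMat_of_not ha, det_incMat_of_not (by tauto)]; simp [ha]

/-- The weight of the arrow from `j` to `a ∈ V ∪ {ρ}`: minus the matrix entry for `a ∈ V`, and
the column sum for `a = ρ`. -/
noncomputable def arrowWt [Fintype V] (M : Matrix V V ℝ) (a : Option V) (j : V) : ℝ :=
  match a with
  | none => ∑ i, M i j
  | some i => -M i j

/-- Row expansion: `M` is a combination of the vectors `e_c - e_a`, `a ∈ V ∪ {ρ}`. -/
lemma row_eq_sum [Fintype V] {M : Matrix V V ℝ} (hM : ∀ i j, M i j = M j i)
    (c i : V) :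
    M c i = ∑ a : Option V,
      arrowWt M a c * ((if c = i then 1 else 0) - (if a = some i then 1 else 0)) := by
  simp only [Fintype.sum_option, arrowWt, mul_sub, Finset.sum_sub_distrib, ← Finset.sum_mul,
    Finset.sum_neg_distrib]
  simp [hM c i]

lemma det_updateRow_eq_sum [Fintype V] {M : Matrix V V ℝ}
    (hM : ∀ i j, M i j = M j i) (x y : V) :
    (M.updateRow x (Pi.single y 1)).det =
      ∑ f : V → Option V, if IsParentMap f ∧ f x = none ∧ Leads f (some x) (some y) then
        ∏ c ∈ Finset.univ.erase x, arrowWt M (f c) c else 0 := by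
  set g : V → Option V → V → ℝ := fun c a =>
    if c = x then (if a = none then Pi.single y 1 else 0)
    else arrowWt M a c • fun i => (if c = i then 1 else 0) - (if a = some i then 1 else 0) with hg
  have h1 : M.updateRow x (Pi.single y 1) = Matrix.of fun c => ∑ a, g c a := by
    ext c i
    by_cases hc : c = x
    · subst hc
      simp [hg, Fintype.sum_option]
    · simp only [Matrix.updateRow_ne hc, Matrix.of_apply, Finset.sum_apply, hg, hc, if_false,
        Pi.smul_apply, smul_eq_mul]
      exact row_eq_sum hM c i
  have h2 : (Matrix.of fun c => ∑ a, g c a).det =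
      ∑ f : V → Option V, (Matrix.of fun c => g c (f c)).det :=
    (Matrix.detRowAlternating (R := ℝ) (n := V)).toMultilinearMap.map_sum g
  rw [h1, h2]
  refine Finset.sum_congr rfl fun f _ => ?_
  by_cases hx : f x = none
  · have h3 : (Matrix.of fun c => g c (f c)) = Matrix.of fun c i =>
        (if c = x then 1 else arrowWt M (f c) c) *
          ((incMat f).updateRow x (Pi.single y 1)) c i := by
      ext c i
      by_cases hc : c = x
      · subst hc; simp [hg, hx]
      · simp [hg, hc, incMat]
    rw [h3, Matrix.det_mul_column, det_updateRow_incMat y hx,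
      ← Finset.mul_prod_erase _ _ (Finset.mem_univ x)]
    rw [Finset.prod_congr rfl (g := fun c => arrowWt M (f c) c)
      (fun c hc => by simp [Finset.ne_of_mem_erase hc])]
    simp [hx]
  · rw [if_neg (fun h => hx h.2.1)]
    exact Matrix.det_eq_zero_of_row_eq_zero x (fun i => by simp [hg, hx])

end Determinants

/-! ### Parent maps and spanning trees -/

section Trees

variable {V : Type*} [Fintype V]

/-- The set of edges `{j, f j}` of a map `f : V → V ∪ {ρ}`. -/
noncomputable def treeOf (f : V → Option V) : Finset (Sym2 (Option V)) :=
  Finset.univ.image fun j => s(some j, f j)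

lemma mem_treeOf {f : V → Option V} {e : Sym2 (Option V)} :
    e ∈ treeOf f ↔ ∃ j, s(some j, f j) = e := by
  simp [treeOf]

lemma treeOf_injOn {f g : V → Option V} (hf : IsParentMap f) (h : treeOf f = treeOf g) :
    f = g := by
  have key : ∀ a, Leads f none a → ∀ j, a = some j → f j = g j := by
    intro a ha
    induction ha with
    | refl => simp
    | @step l _ ih =>
      rintro j hj
      obtain rfl := Option.some.inj hj
      have hm : s(some l, f l) ∈ treeOf g := h ▸ mem_treeOf.2 ⟨l, rfl⟩
      obtain ⟨i, hi⟩ := mem_treeOf.1 hm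
      rw [Sym2.eq_iff] at hi
      rcases hi with ⟨h1, h2⟩ | ⟨h1, h2⟩
      · rw [← h2, Option.some.inj h1]
      · -- otherwise `l → i → l` would be a 2-cycle of `f`
        have := ih i h1.symm
        exact (hf.no_two_cycle h1.symm (this.trans h2)).elim
  funext j
  exact key _ (hf j) j rfl

lemma card_treeOf_le (f : V → Option V) : (treeOf f).card ≤ Fintype.card V :=
  Finset.card_image_le

lemma connected_treeOf {f : V → Option V} (hf : IsParentMap f) :
    (SimpleGraph.fromEdgeSet (↑(treeOf f) : Set (Sym2 (Option V)))).Connected := by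
  have key : ∀ a, Leads f none a →
      (SimpleGraph.fromEdgeSet (↑(treeOf f) : Set (Sym2 (Option V)))).Reachable a none := by
    intro a ha
    induction ha with
    | refl => exact .refl _
    | @step l _ ih =>
      refine SimpleGraph.Reachable.trans (SimpleGraph.Adj.reachable ?_) ih
      rw [SimpleGraph.fromEdgeSet_adj]
      exact ⟨mem_treeOf.2 ⟨l, rfl⟩, (hf.ne_self l).symm⟩
  exact ⟨fun a b => (key a (hf.leads a)).trans (key b (hf.leads b)).symm⟩

lemma edgeSet_fromEdgeSet_treeOf {f : V → Option V} (hf : IsParentMap f) :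
    (SimpleGraph.fromEdgeSet (↑(treeOf f) : Set (Sym2 (Option V)))).edgeSet = ↑(treeOf f) := by
  rw [SimpleGraph.edgeSet_fromEdgeSet, sdiff_eq_left, Set.disjoint_left]
  intro e he hd
  obtain ⟨j, rfl⟩ := mem_treeOf.1 he
  exact hf.ne_self j (by simpa using hd : some j = f j).symm

lemma card_treeOf {f : V → Option V} (hf : IsParentMap f) :
    (treeOf f).card = Fintype.card V := by
  refine le_antisymm (card_treeOf_le f) ?_
  have := (connected_treeOf hf).card_vert_le_card_edgeSet_add_one
  rw [edgeSet_fromEdgeSet_treeOf hf] at this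
  simpa using this

lemma treeOf_isTree {f : V → Option V} (hf : IsParentMap f) :
    (SimpleGraph.fromEdgeSet (↑(treeOf f) : Set (Sym2 (Option V)))).IsTree := by
  rw [SimpleGraph.isTree_iff_connected_and_card]
  refine ⟨connected_treeOf hf, ?_⟩
  rw [edgeSet_fromEdgeSet_treeOf hf]
  simpa using card_treeOf hf

lemma edge_injective {f : V → Option V} (hf : IsParentMap f) :
    Function.Injective fun j => s(some j, f j) := by
  have := card_treeOf hf
  rw [treeOf, ← Finset.card_univ, Finset.card_image_iff] at this
  simpa using this

/-- Every loop-free edge set of a tree spanning `V ∪ {ρ}` consists of the edges of a parent map: send each vertex to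
a neighbour closer to `ρ`. -/
lemma exists_parentMap {T : Finset (Sym2 (Option V))}
    (hT : (SimpleGraph.fromEdgeSet (↑T : Set (Sym2 (Option V)))).IsTree)
    (hd : ∀ e ∈ T, ¬ e.IsDiag) : ∃ f : V → Option V, IsParentMap f ∧ treeOf f = T := by
  set H := SimpleGraph.fromEdgeSet (↑T : Set (Sym2 (Option V))) with hH
  have hstep : ∀ j : V, ∃ a, H.Adj (some j) a ∧ H.dist a none < H.dist (some j) none := by
    intro j
    obtain ⟨p, hp⟩ := hT.connected.exists_walk_length_eq_dist (some j) none
    cases p with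
    | cons h q =>
      refine ⟨_, h, ?_⟩
      have := SimpleGraph.dist_le q
      rw [SimpleGraph.Walk.length_cons] at hp
      omega
  choose f hadj hdist using hstep
  have hf : IsParentMap f := by
    have key : ∀ k a, H.dist a none < k → Leads f none a := by
      intro k
      induction k with
      | zero => intro a h; omega
      | succ k ih =>
        rintro (_ | j) h
        · exact .refl
        · exact .step (ih _ (lt_of_lt_of_le (hdist j) (Nat.lt_succ_iff.1 h)))
    exact fun j => key _ _ (Nat.lt_succ_self _)
  refine ⟨f, hf, Finset.eq_of_subset_of_card_le ?_ ?_⟩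
  · intro e he
    obtain ⟨j, rfl⟩ := mem_treeOf.1 he
    have := hadj j
    rw [hH, SimpleGraph.fromEdgeSet_adj] at this
    exact this.1
  · rw [card_treeOf hf]
    have h1 := (SimpleGraph.isTree_iff_connected_and_card.1 hT).2
    have h2 : H.edgeSet = ↑T := by
      rw [hH, SimpleGraph.edgeSet_fromEdgeSet, sdiff_eq_left, Set.disjoint_left]
      exact fun e he hde => hd e he (by simpa using hde)
    rw [h2] at h1
    have h3 : T.card + 1 = Fintype.card V + 1 := by simpa using h1
    omega

lemma rootEdge_mem_treeOf {f : V → Option V} {j : V} :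
    rootEdge j ∈ treeOf f ↔ f j = none := by
  rw [mem_treeOf]
  constructor
  · rintro ⟨i, hi⟩
    rw [rootEdge, Sym2.eq_iff] at hi
    rcases hi with ⟨h1, h2⟩ | ⟨h1, h2⟩
    · rwa [← Option.some.inj h1]
    · exact absurd h1 (by simp)
  · intro h
    exact ⟨j, by rw [h, rootEdge]⟩

lemma roots_treeOf (f : V → Option V) :
    roots (treeOf f) = Finset.univ.filter fun j => f j = none := by
  ext j
  simp [roots, rootEdge_mem_treeOf]

lemma forestOf_treeOf (f : V → Option V) :
    forestOf (treeOf f) =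
      (Finset.univ.filter fun j => f j ≠ none).image fun j => s(some j, f j) := by
  ext e
  simp only [forestOf, Finset.mem_filter, mem_treeOf, Finset.mem_image, Finset.mem_univ, true_and]
  constructor
  · rintro ⟨⟨j, rfl⟩, h⟩
    exact ⟨j, fun hj => h (by simp [hj]), rfl⟩
  · rintro ⟨j, hj, rfl⟩
    exact ⟨⟨j, rfl⟩, fun h => hj (by simpa [eq_comm] using h)⟩

lemma connIn_treeOf {f : V → Option V} (hf : IsParentMap f) {x : V} (hx : f x = none) (y : V) :
    connIn (treeOf f) x y ↔ Leads f (some x) (some y) := by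
  rw [connIn]
  set H := SimpleGraph.fromEdgeSet (↑(forestOf (treeOf f)) : Set (Sym2 (Option V))) with hH
  have hadj : ∀ a b, H.Adj a b → (Leads f (some x) a ↔ Leads f (some x) b) := by
    have aux : ∀ j, f j ≠ none → (Leads f (some x) (some j) ↔ Leads f (some x) (f j)) := by
      intro j hj
      rw [leads_some_iff, or_iff_right]
      intro h
      exact hj (Option.some.inj h ▸ hx)
    intro a b hab
    rw [hH, SimpleGraph.fromEdgeSet_adj, forestOf_treeOf] at hab
    obtain ⟨j, hj, he⟩ := Finset.mem_image.1 (Finset.mem_coe.1 hab.1)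
    have hj' := aux j (Finset.mem_filter.1 hj).2
    rw [Sym2.eq_iff] at he
    rcases he with ⟨rfl, rfl⟩ | ⟨rfl, rfl⟩
    · exact hj'
    · exact hj'.symm
  constructor
  · rintro ⟨p⟩
    have key : ∀ a b, H.Walk a b → (Leads f (some x) a ↔ Leads f (some x) b) := by
      intro a b p
      induction p with
      | nil => rfl
      | cons h _ ih => exact (hadj _ _ h).trans ih
    exact (key _ _ p).1 .refl
  · intro h
    have key : ∀ a, Leads f (some x) a → H.Reachable (some x) a := by
      intro a ha
      induction ha with
      | refl => exact .refl _
      | @step l hl ih =>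
        refine ih.trans (SimpleGraph.Adj.reachable ?_)
        rw [hH, SimpleGraph.fromEdgeSet_adj, forestOf_treeOf]
        refine ⟨?_, hf.ne_self l⟩
        rw [Sym2.eq_swap]
        refine Finset.mem_coe.2 (Finset.mem_image.2 ⟨l, ?_, rfl⟩)
        refine Finset.mem_filter.2 ⟨Finset.mem_univ _, fun hn => ?_⟩
        rw [hn, leads_none_iff] at hl
        simp at hl
    exact key _ h

lemma treeWeight_eq {M : Matrix V V ℝ} (hM : ∀ i j, M i j = M j i) {f : V → Option V}
    (hf : IsParentMap f) {x : V} (hx : f x = none) :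
    (∏ j ∈ (roots (treeOf f)).erase x, ∑ i, M i j) *
        ∏ e ∈ forestOf (treeOf f), esym (fun a b => -(Mop M a b)) e =
      ∏ c ∈ Finset.univ.erase x, arrowWt M (f c) c := by
  rw [roots_treeOf, forestOf_treeOf, Finset.prod_image (fun i _ j _ h => edge_injective hf h)]
  rw [← Finset.prod_filter_mul_prod_filter_not (Finset.univ.erase x) (fun c => f c = none)]
  congr 1
  · refine Finset.prod_congr ?_ ?_
    · ext j; simp [and_comm]
    · intro j hj
      have : f j = none := by simp at hj; exact hj.2
      simp [this, arrowWt]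
  · refine Finset.prod_congr ?_ ?_
    · ext j
      simp only [Finset.mem_filter, Finset.mem_univ, true_and, Finset.mem_erase, and_true]
      exact ⟨fun h => ⟨fun e => h (e ▸ hx), h⟩, fun h => h.2⟩
    · intro j hj
      have hj' : f j ≠ none := by simp at hj; exact hj.2
      obtain ⟨i, hi⟩ := Option.ne_none_iff_exists'.1 hj'
      simp only [hi, arrowWt, esym, Sym2.lift_mk, Mop]
      rw [hM j i]; ring

omit [Fintype V] in
lemma aug_adj_some {G : SimpleGraph V} {i j : V} :
    (aug G).Adj (some i) (some j) ↔ G.Adj i j := by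
  simp only [aug, SimpleGraph.fromRel_adj, G.adj_comm j i, or_self, ne_eq, Option.some.injEq]
  exact ⟨fun h => h.2, fun h => ⟨h.ne, h⟩⟩

omit [Fintype V] in
lemma aug_adj_none {G : SimpleGraph V} {j : V} : (aug G).Adj (some j) none := by
  simp [aug, SimpleGraph.fromRel_adj]

/-- The forest sum over spanning trees is the sum over parent maps. Parent maps using an arrow
outside the graph correspond to no tree, but have weight zero. -/
lemma sum_parentMaps_eq {G : SimpleGraph V} {M : Matrix V V ℝ} (hM : ∀ i j, M i j = M j i)
    (hM0 : ∀ i j, i ≠ j → ¬ G.Adj i j → M i j = 0) (x y : V) :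
    (∑ f : V → Option V, if IsParentMap f ∧ f x = none ∧ Leads f (some x) (some y) then
        ∏ c ∈ Finset.univ.erase x, arrowWt M (f c) c else 0) =
      ∑ T ∈ (STrees (aug G)).filter (fun T => rootEdge x ∈ T ∧ connIn T x y),
          (∏ j ∈ (roots T).erase x, ∑ i, M i j) *
          ∏ e ∈ forestOf T, esym (fun a b => -(Mop M a b)) e := by
  rw [← Finset.sum_filter]
  refine Finset.sum_bij_ne_zero (fun f _ _ => treeOf f) ?_ ?_ ?_ ?_
  · intro f hf hne
    obtain ⟨hf1, hf2, hf3⟩ := (Finset.mem_filter.1 hf).2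
    simp only [STrees, Finset.mem_filter, Finset.mem_univ, true_and]
    refine ⟨⟨?_, treeOf_isTree hf1⟩, rootEdge_mem_treeOf.2 hf2, (connIn_treeOf hf1 hf2 y).2 hf3⟩
    intro e he
    obtain ⟨j, rfl⟩ := mem_treeOf.1 (Finset.mem_coe.1 he)
    rw [SimpleGraph.mem_edgeSet]
    rcases hj : f j with _ | i
    · exact aug_adj_none
    · rw [aug_adj_some]
      by_contra hG
      have hij : i ≠ j := fun e => hf1.ne_self j (e ▸ hj)
      have hjx : j ≠ x := fun e => by rw [e, hf2] at hj; simp at hj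
      apply hne
      refine Finset.prod_eq_zero (Finset.mem_erase.2 ⟨hjx, Finset.mem_univ j⟩) ?_
      simp [hj, arrowWt, hM0 i j hij (fun h => hG h.symm)]
  · intro f hf _ g _ _ h
    exact treeOf_injOn (Finset.mem_filter.1 hf).2.1 h
  · intro T hT hne
    simp only [STrees, Finset.mem_filter, Finset.mem_univ, true_and] at hT
    obtain ⟨⟨hsub, htree⟩, hroot, hconn⟩ := hT
    obtain ⟨f, hf, rfl⟩ := exists_parentMap htree
      (fun e he => (aug G).not_isDiag_of_mem_edgeSet (hsub he))
    have hx := rootEdge_mem_treeOf.1 hroot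
    refine ⟨f, ?_, ?_, rfl⟩
    · simp only [Finset.mem_filter, Finset.mem_univ, true_and]
      exact ⟨hf, hx, (connIn_treeOf hf hx y).1 hconn⟩
    · rwa [treeWeight_eq hM hf hx] at hne
  · intro f hf _
    obtain ⟨hf1, hf2, _⟩ := (Finset.mem_filter.1 hf).2
    exact (treeWeight_eq hM hf1 hf2).symm

end Trees

/-- Abdesselam's minor formula, symmetric singleton case:
for `V = {0,…,n}` (i.e. `Fin (n+1)`), a connected graph `Γ` on `V`, and a symmetric matrix
`M` vanishing off the diagonal on non-edges,
`det M_{y^c x^c} = (−1)^{x+y} Σ_{T ∈ 𝒯_xy} [Π_{j ∈ R(T)∖{x}} (Σ_i M_ij)] Π_{(i∼j) ∈ F(T)} (−M_ij)`,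
where `M_{y^c x^c}` is obtained from `M` by deleting row `y` and column `x`. -/
theorem stmt_1 {n : ℕ} (G : SimpleGraph (Fin (n + 1))) (hG : G.Connected)
    (x y : Fin (n + 1))
    (M : Matrix (Fin (n + 1)) (Fin (n + 1)) ℝ)
    (hMsymm : ∀ i j, M i j = M j i)
    (hM0 : ∀ i j, i ≠ j → ¬ G.Adj i j → M i j = 0) :
    (M.submatrix y.succAbove x.succAbove).det
      = (-1 : ℝ) ^ ((x : ℕ) + (y : ℕ)) *
        ∑ T ∈ (STrees (aug G)).filter (fun T => rootEdge x ∈ T ∧ connIn T x y),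
          (∏ j ∈ (roots T).erase x, ∑ i, M i j) *
          ∏ e ∈ forestOf T, esym (fun a b => -(Mop M a b)) e := by
  have hT : M.transpose = M := by ext i j; exact hMsymm j i
  -- the `(x, y)` cofactor, moved to row `x` by symmetry
  have h1 : M.adjugate x y = (M.updateRow x (Pi.single y 1)).det := by
    rw [← Matrix.adjugate_apply]
    have h := congrFun (congrFun (Matrix.adjugate_transpose M) y) x
    rwa [hT, Matrix.transpose_apply] at h
  have h2 := (det_updateRow_eq_sum hMsymm x y).trans (sum_parentMaps_eq hMsymm hM0 x y)
  rw [Matrix.adjugate_fin_succ_eq_det_submatrix] at h1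
  -- cancel the sign of the cofactor
  have h3 : (M.submatrix y.succAbove x.succAbove).det =
      (-1 : ℝ) ^ ((x : ℕ) + (y : ℕ)) * (M.updateRow x (Pi.single y 1)).det := by
    rw [← h1, ← mul_assoc, ← pow_add, Even.neg_one_pow ⟨(x : ℕ) + y, by ring⟩, one_mul]
  refine h3.trans (congrArg _ ?_)
  -- the two sides may only differ in their decidability instances
  convert h2

end H22
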